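/- Let X and Y be random vectors in ℝⁿ that are elliptically distributed with common location 0 and the same characteristic generator φ, i.e., E[exp(i⟨t,X⟩)] = φ(tᵀΣ_x t) and E[exp(i⟨t,Y⟩)] = φ(tᵀΣ_y t) for all t ∈ ℝⁿ, where Σ_x and Σ_y are positive semidefinite. If Σ_y − Σ_x is positive semidefinite, then for every Borel measurable set C ⊆ ℝⁿ that is convex and centrally symmetric (C = −C), one has P(X ∈ C) ≥ P(Y ∈ C). -/

import Mathlib

open MeasureTheory ProbabilityTheory Matrix

/-- Characteristic function of a random vector `X : Ω → ℝⁿ` at `t ∈ ℝⁿ`: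
`E[exp(i⟨t,X⟩)]`. -/
noncomputable def charFn {Ω : Type*} [MeasurableSpace Ω] {n : ℕ}
    (P : Measure Ω) (X : Ω → (Fin n → ℝ)) (t : Fin n → ℝ) : ℂ :=
  ∫ ω, Complex.exp (((∑ i, t i * X ω i : ℝ) : ℂ) * Complex.I) ∂P

/-!
A surjective factorization `Σ_y = Kᵀ K`, `Σ_x = Kᵀ T² K` with `0 ⪯ T ⪯ 1` writes `Y = Kᵀ Z` and
`X = Kᵀ T Z` in law, where `Z` is spherical, so it suffices to compare `P(Z ∈ D)` with
`P(T Z ∈ D)` for `D` convex and symmetric.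

By the Prékopa–Leindler inequality, `v ↦ ∫ f (x + v) ψ x` is maximal at `v = 0` for even
log-concave `f` and `ψ`; its second-order behaviour at `0` gives `0 ≤ ∫ ∂ᵥf ∂ᵥψ`. Taking for `ψ` a
truncation of `R² - ‖x‖²` yields `∫ ⟪x, v⟫ ∂ᵥf ≤ 0` over a spherical shell. These are, up to
positive weights, the terms of the derivative of `t ↦ ∫ f ((1 - t (1 - T)) x)` expanded in an
eigenbasis of `T`, so applying `T` never decreases the integral of `f` over a shell.

For independent spherical `X` and `Z`, the vectors `‖Z‖ X` and `‖X‖ Z` have the same law, as their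
characteristic functions coincide. With `X` uniform on a thin shell, this transfers the inequality
from shells to the law of `Z`, without any surface measure.
-/

open Filter Metric
open scoped ENNReal NNReal Topology RealInnerProductSpace

section OneDimensional

theorem volume_add_volume_le_of_isCompact {K L S : Set ℝ} (hK : IsCompact K) (hL : IsCompact L)
    (hK₀ : K.Nonempty) (hL₀ : L.Nonempty) (hS : ∀ x ∈ K, ∀ y ∈ L, midpoint ℝ x y ∈ S) :
    volume K + volume L ≤ 2 * volume S := by
  obtain ⟨M, hM, hM_max⟩ := hK.exists_isGreatest hK₀
  obtain ⟨m, hm, hm_min⟩ := hL.exists_isLeast hL₀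
  -- Halving `K` towards `min L` and `L` towards `max K` yields subsets of `S` meeting in at most
  -- one point.
  have volume_half (c : ℝ) (s : Set ℝ) :
      2 * volume (AffineMap.homothety c (2⁻¹ : ℝ) '' s) = volume s := by
    rw [Measure.addHaar_image_homothety, ← mul_assoc, Module.finrank_self, pow_one, abs_of_pos
      (by norm_num), ENNReal.ofReal_inv_of_pos two_pos, ENNReal.ofReal_ofNat,
      ENNReal.mul_inv_cancel two_ne_zero ENNReal.ofNat_ne_top, one_mul]
  have left_le : ∀ z ∈ AffineMap.homothety m (2⁻¹ : ℝ) '' K, z ≤ midpoint ℝ M m := by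
    rintro _ ⟨x, hx, rfl⟩
    rw [homothety_inv_two, midpoint_comm]
    exact midpoint_le_midpoint (hM_max hx) le_rfl
  have le_right : ∀ z ∈ AffineMap.homothety M (2⁻¹ : ℝ) '' L, midpoint ℝ M m ≤ z := by
    rintro _ ⟨y, hy, rfl⟩
    rw [homothety_inv_two]
    exact midpoint_le_midpoint le_rfl (hm_min hy)
  have disjoint : AEDisjoint volume (AffineMap.homothety m (2⁻¹ : ℝ) '' K)
      (AffineMap.homothety M (2⁻¹ : ℝ) '' L) :=
    measure_mono_null (fun z hz ↦ le_antisymm (left_le z hz.1) (le_right z hz.2))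
      (Real.volume_singleton (a := midpoint ℝ M m))
  have subset :
      AffineMap.homothety m (2⁻¹ : ℝ) '' K ∪ AffineMap.homothety M (2⁻¹ : ℝ) '' L ⊆ S := by
    rintro _ (⟨x, hx, rfl⟩ | ⟨y, hy, rfl⟩)
    · rw [homothety_inv_two, midpoint_comm]
      exact hS x hx m hm
    · rw [homothety_inv_two]
      exact hS M hM y hy
  have hL' := (hL.image (AffineMap.homothety_continuous M (2⁻¹ : ℝ))).measurableSet
  calc volume K + volume L
      = 2 * volume (AffineMap.homothety m (2⁻¹ : ℝ) '' K ∪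
          AffineMap.homothety M (2⁻¹ : ℝ) '' L) := by
        rw [measure_union₀ hL'.nullMeasurableSet disjoint, mul_add, volume_half, volume_half]
    _ ≤ 2 * volume S := by gcongr

theorem volume_add_volume_le {A B S : Set ℝ} (hA : MeasurableSet A) (hB : MeasurableSet B)
    (hA₀ : A.Nonempty) (hB₀ : B.Nonempty) (hS : ∀ x ∈ A, ∀ y ∈ B, midpoint ℝ x y ∈ S) :
    volume A + volume B ≤ 2 * volume S := by
  obtain ⟨a, ha⟩ := hA₀
  obtain ⟨b, hb⟩ := hB₀
  rw [hA.measure_eq_iSup_isCompact, hB.measure_eq_iSup_isCompact]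
  simp only [iSup_and']
  refine ENNReal.biSup_add_biSup_le' (p := fun K : Set ℝ ↦ K ⊆ A ∧ IsCompact K)
    (q := fun K : Set ℝ ↦ K ⊆ B ∧ IsCompact K) ⟨∅, by simp⟩ ⟨∅, by simp⟩ ?_
  rintro K ⟨hKA, hK⟩ L ⟨hLB, hL⟩
  calc volume K + volume L ≤ volume (insert a K) + volume (insert b L) := by
        gcongr <;> exact Set.subset_insert _ _
    _ ≤ 2 * volume S :=
        volume_add_volume_le_of_isCompact (hK.insert a) (hL.insert b) (Set.insert_nonempty _ _)
          (Set.insert_nonempty _ _) fun x hx y hy ↦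
            hS x (Set.insert_subset ha hKA hx) y (Set.insert_subset hb hLB hy)

theorem lintegral_eq_lintegral_meas_ofReal_lt {α : Type*} [MeasurableSpace α] {μ : Measure α}
    {f : α → ℝ≥0∞} (hf : Measurable f) (hf_top : ∀ x, f x ≠ ∞) :
    ∫⁻ x, f x ∂μ = ∫⁻ t in Set.Ioi (0 : ℝ), μ {x | ENNReal.ofReal t < f x} := by
  calc ∫⁻ x, f x ∂μ = ∫⁻ x, ENNReal.ofReal (f x).toReal ∂μ :=
        lintegral_congr fun x ↦ (ENNReal.ofReal_toReal (hf_top x)).symm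
    _ = ∫⁻ t in Set.Ioi (0 : ℝ), μ {x | t < (f x).toReal} :=
        lintegral_eq_lintegral_meas_lt μ (.of_forall fun _ ↦ ENNReal.toReal_nonneg)
          hf.ennreal_toReal.aemeasurable
    _ = _ := setLIntegral_congr_fun measurableSet_Ioi fun t ht ↦ by
        simp_rw [ENNReal.ofReal_lt_iff_lt_toReal (le_of_lt ht) (hf_top _)]

theorem measurable_meas_ofReal_lt {α : Type*} [MeasurableSpace α] (μ : Measure α) (f : α → ℝ≥0∞) :
    Measurable fun t : ℝ ↦ μ {x | ENNReal.ofReal t < f x} :=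
  Antitone.measurable fun _ _ hst ↦
    measure_mono fun _ hx ↦ (ENNReal.ofReal_le_ofReal hst).trans_lt hx

theorem lintegral_add_lintegral_le_of_iSup_eq_one {f g h : ℝ → ℝ≥0∞} (hf : Measurable f)
    (hg : Measurable g) (hh : Measurable h) (hf₁ : ⨆ x, f x = 1) (hg₁ : ⨆ x, g x = 1)
    (hfgh : ∀ x y, f x * g y ≤ h (midpoint ℝ x y) ^ 2) :
    (∫⁻ x, f x) + ∫⁻ x, g x ≤ 2 * ∫⁻ x, h x := by
  have le_one {u : ℝ → ℝ≥0∞} (hu : ⨆ x, u x = 1) (x : ℝ) : u x ≤ 1 := hu ▸ le_iSup u x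
  have ne_top {u : ℝ → ℝ≥0∞} (hu : ∀ x, u x ≤ 1) (x : ℝ) : u x ≠ ∞ :=
    ne_top_of_le_ne_top ENNReal.one_ne_top (hu x)
  have superlevel_le (t : ℝ) : volume {x | ENNReal.ofReal t < f x} +
      volume {x | ENNReal.ofReal t < g x} ≤ 2 * volume {x | ENNReal.ofReal t < min (h x) 1} := by
    rcases lt_or_ge (ENNReal.ofReal t) 1 with ht | ht
    · refine volume_add_volume_le (measurableSet_lt measurable_const hf)
        (measurableSet_lt measurable_const hg) (lt_iSup_iff.1 (ht.trans_eq hf₁.symm))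
        (lt_iSup_iff.1 (ht.trans_eq hg₁.symm)) fun x hx y hy ↦ lt_min ?_ ht
      refine lt_of_pow_lt_pow_left' 2 (lt_of_lt_of_le ?_ (hfgh x y))
      rw [sq]
      exact ENNReal.mul_lt_mul hx hy
    · simp [fun x ↦ ((le_one hf₁ x).trans ht).not_gt, fun x ↦ ((le_one hg₁ x).trans ht).not_gt]
  calc (∫⁻ x, f x) + ∫⁻ x, g x
      ≤ 2 * ∫⁻ x, min (h x) 1 := by
        rw [lintegral_eq_lintegral_meas_ofReal_lt hf (ne_top (le_one hf₁)),
          lintegral_eq_lintegral_meas_ofReal_lt hg (ne_top (le_one hg₁)),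
          lintegral_eq_lintegral_meas_ofReal_lt (hh.min measurable_const)
            (ne_top fun x ↦ min_le_right _ _),
          ← lintegral_add_left (measurable_meas_ofReal_lt volume f),
          ← lintegral_const_mul _ (measurable_meas_ofReal_lt _ _)]
        exact lintegral_mono superlevel_le
    _ ≤ 2 * ∫⁻ x, h x := by
        gcongr
        exact min_le_left _ _

end OneDimensional

section PrekopaLeindler

theorem mul_le_sq_of_add_le_two_mul {a b c : ℝ≥0∞} (h : a + b ≤ 2 * c) : a * b ≤ c ^ 2 := by
  wlog hba : b ≤ a generalizing a b
  · rw [mul_comm]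
    exact this ((add_comm b a).trans_le h) (le_of_not_ge hba)
  obtain ⟨d, rfl⟩ := exists_add_of_le hba
  refine (ENNReal.mul_le_mul_iff_right (a := 4) (by norm_num) (by norm_num)).1 ?_
  calc 4 * ((b + d) * b) ≤ 4 * ((b + d) * b) + d ^ 2 := le_self_add
    _ = (b + d + b) ^ 2 := by ring
    _ ≤ (2 * c) ^ 2 := by gcongr
    _ = 4 * c ^ 2 := by ring

/-- The midpoint form of the Prékopa–Leindler inequality holds for the volume of `E`. -/
def SatisfiesPrekopaLeindler (E : Type*) [AddCommGroup E] [Module ℝ E] [MeasureSpace E] : Prop :=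
  ∀ ⦃f g h : E → ℝ≥0∞⦄, Measurable f → Measurable g → Measurable h →
    (∀ x y, f x * g y ≤ h (midpoint ℝ x y) ^ 2) → (∫⁻ x, f x) * ∫⁻ x, g x ≤ (∫⁻ x, h x) ^ 2

theorem lintegral_mul_lintegral_le_of_iSup_ne_top {f g h : ℝ → ℝ≥0∞} (hf : Measurable f)
    (hg : Measurable g) (hh : Measurable h) (hf_top : ⨆ x, f x ≠ ∞) (hg_top : ⨆ x, g x ≠ ∞)
    (hfgh : ∀ x y, f x * g y ≤ h (midpoint ℝ x y) ^ 2) :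
    (∫⁻ x, f x) * ∫⁻ x, g x ≤ (∫⁻ x, h x) ^ 2 := by
  set a := ⨆ x, f x
  set b := ⨆ x, g x
  rcases eq_or_ne a 0 with ha₀ | ha₀
  · simp [ENNReal.iSup_eq_zero.1 ha₀]
  rcases eq_or_ne b 0 with hb₀ | hb₀
  · simp [ENNReal.iSup_eq_zero.1 hb₀]
  obtain ⟨c, hc⟩ : ∃ c : ℝ≥0∞, c ^ 2 = a * b :=
    ⟨(a * b) ^ (2⁻¹ : ℝ), by rw [← ENNReal.rpow_mul_natCast]; norm_num⟩
  have hc₀ : c ^ 2 ≠ 0 := hc ▸ mul_ne_zero ha₀ hb₀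
  have hc_top : c ^ 2 ≠ ∞ := hc ▸ ENNReal.mul_ne_top hf_top hg_top
  have scale_mul (u v : ℝ≥0∞) : a⁻¹ * u * (b⁻¹ * v) = (c ^ 2)⁻¹ * (u * v) := by
    rw [hc, ENNReal.mul_inv (.inl ha₀) (.inl hf_top)]
    ring
  have scale_sq (w : ℝ≥0∞) : (c⁻¹ * w) ^ 2 = (c ^ 2)⁻¹ * w ^ 2 := by rw [mul_pow, ENNReal.inv_pow]
  have normalized : (a⁻¹ * ∫⁻ x, f x) + b⁻¹ * ∫⁻ x, g x ≤ 2 * (c⁻¹ * ∫⁻ x, h x) := by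
    rw [← lintegral_const_mul _ hf, ← lintegral_const_mul _ hg, ← lintegral_const_mul _ hh]
    refine lintegral_add_lintegral_le_of_iSup_eq_one (hf.const_mul _) (hg.const_mul _)
      (hh.const_mul _) ?_ ?_ fun x y ↦ ?_
    · rw [← ENNReal.mul_iSup, ENNReal.inv_mul_cancel ha₀ hf_top]
    · rw [← ENNReal.mul_iSup, ENNReal.inv_mul_cancel hb₀ hg_top]
    · rw [scale_mul, scale_sq]
      gcongr
      exact hfgh x y
  have normalized_mul := mul_le_sq_of_add_le_two_mul normalized
  rw [scale_mul, scale_sq] at normalized_mul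
  exact (ENNReal.mul_le_mul_iff_right (ENNReal.inv_ne_zero.2 hc_top)
    (ENNReal.inv_ne_top.2 hc₀)).1 normalized_mul

theorem lintegral_eq_iSup_lintegral_min_natCast {α : Type*} [MeasurableSpace α] {μ : Measure α}
    {f : α → ℝ≥0∞} (hf : Measurable f) : ∫⁻ x, f x ∂μ = ⨆ N : ℕ, ∫⁻ x, min (f x) N ∂μ := by
  rw [← lintegral_iSup (fun N ↦ hf.min measurable_const)
    fun i j hij x ↦ min_le_min_left _ (Nat.cast_le.2 hij)]
  refine lintegral_congr fun x ↦ ?_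
  rw [← inf_iSup_eq, ENNReal.iSup_natCast, inf_top_eq]

theorem satisfiesPrekopaLeindler_real : SatisfiesPrekopaLeindler ℝ := by
  intro f g h hf hg hh hfgh
  have iSup_min_ne_top (u : ℝ → ℝ≥0∞) (N : ℕ) : ⨆ x, min (u x) N ≠ ∞ :=
    ne_top_of_le_ne_top (ENNReal.natCast_ne_top N) (iSup_le fun x ↦ min_le_right _ _)
  rw [lintegral_eq_iSup_lintegral_min_natCast hf, lintegral_eq_iSup_lintegral_min_natCast hg]
  simp only [ENNReal.iSup_mul, ENNReal.mul_iSup, iSup_le_iff]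
  intro N M
  refine lintegral_mul_lintegral_le_of_iSup_ne_top (hf.min measurable_const)
    (hg.min measurable_const) hh (iSup_min_ne_top f M) (iSup_min_ne_top g N) fun x y ↦ ?_
  exact (mul_le_mul' (min_le_left _ _) (min_le_left _ _)).trans (hfgh x y)

namespace SatisfiesPrekopaLeindler

section

variable {E F : Type*} [AddCommGroup E] [Module ℝ E] [MeasureSpace E]
  [AddCommGroup F] [Module ℝ F] [MeasureSpace F]

theorem prod [SFinite (volume : Measure F)] (hE : SatisfiesPrekopaLeindler E)
    (hF : SatisfiesPrekopaLeindler F) : SatisfiesPrekopaLeindler (E × F) := by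
  intro f g h hf hg hh hfgh
  simp only [Measure.volume_eq_prod]
  rw [lintegral_prod _ hf.aemeasurable, lintegral_prod _ hg.aemeasurable,
    lintegral_prod _ hh.aemeasurable]
  refine hE hf.lintegral_prod_right' hg.lintegral_prod_right' hh.lintegral_prod_right' fun x y ↦ ?_
  refine hF (by fun_prop) (by fun_prop) (by fun_prop) fun x' y' ↦ (hfgh (x, x') (y, y')).trans_eq ?_
  rw [midpoint_eq_smul_add, midpoint_eq_smul_add, midpoint_eq_smul_add]
  rfl

theorem of_measurePreserving (hE : SatisfiesPrekopaLeindler E) (φ : E →ₗ[ℝ] F)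
    (hφ : MeasurePreserving φ) : SatisfiesPrekopaLeindler F := by
  intro f g h hf hg hh hfgh
  rw [← hφ.lintegral_comp hf, ← hφ.lintegral_comp hg, ← hφ.lintegral_comp hh]
  refine hE (hf.comp hφ.measurable) (hg.comp hφ.measurable) (hh.comp hφ.measurable) fun x y ↦ ?_
  simpa [midpoint_eq_smul_add] using hfgh (φ x) (φ y)

end

theorem fin_pi (n : ℕ) : SatisfiesPrekopaLeindler (Fin n → ℝ) := by
  induction n with
  | zero =>
    intro f g h _ _ _ hfgh
    simpa [volume_pi, Measure.pi_of_empty _ (0 : Fin 0 → ℝ)] using hfgh 0 0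
  | succ n ih =>
    refine (satisfiesPrekopaLeindler_real.prod ih).of_measurePreserving
      (Fin.consLinearEquiv ℝ fun _ ↦ ℝ).toLinearMap ?_
    convert! (volume_preserving_piFinSuccAbove (fun _ : Fin (n + 1) ↦ ℝ) 0).symm using 1
    ext x i
    simp

theorem of_finiteDimensional (E : Type*) [NormedAddCommGroup E] [InnerProductSpace ℝ E]
    [FiniteDimensional ℝ E] [MeasurableSpace E] [BorelSpace E] : SatisfiesPrekopaLeindler E :=
  ((fin_pi _).of_measurePreserving (WithLp.linearEquiv 2 ℝ _).symm.toLinearMap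
      (PiLp.volume_preserving_toLp _)).of_measurePreserving
    (stdOrthonormalBasis ℝ E).repr.symm.toLinearEquiv.toLinearMap
    (stdOrthonormalBasis ℝ E).measurePreserving_repr_symm

end SatisfiesPrekopaLeindler

end PrekopaLeindler

/-- Nonnegative even functions that are log-concave, in midpoint form: densities for which
Anderson's inequality holds. -/
structure EvenLogConcave {E : Type*} [AddCommGroup E] [Module ℝ E] (f : E → ℝ) : Prop where
  nonneg : ∀ x, 0 ≤ f x
  even : Function.Even f
  mul_le : ∀ x y, f x * f y ≤ f (midpoint ℝ x y) ^ 2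

namespace EvenLogConcave

section Algebra

variable {E F : Type*} [AddCommGroup E] [Module ℝ E] [AddCommGroup F] [Module ℝ F]

theorem comp_linearMap {f : F → ℝ} (hf : EvenLogConcave f) (T : E →ₗ[ℝ] F) :
    EvenLogConcave fun x ↦ f (T x) where
  nonneg x := hf.nonneg (T x)
  even x := by simp only [map_neg, hf.even (T x)]
  mul_le x y := by simpa [midpoint_eq_smul_add] using hf.mul_le (T x) (T y)

theorem max_zero_sub {ρ : E → ℝ} (hρ : ConvexOn ℝ Set.univ ρ) (hρ_even : Function.Even ρ) (c : ℝ) :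
    EvenLogConcave fun x ↦ max 0 (c - ρ x) where
  nonneg x := le_max_left _ _
  even x := by simp only [hρ_even x]
  mul_le x y := by
    have convex : ρ (midpoint ℝ x y) ≤ 2⁻¹ * ρ x + 2⁻¹ * ρ y := by
      rw [midpoint_eq_smul_add, invOf_eq_inv, smul_add]
      exact hρ.2 (Set.mem_univ x) (Set.mem_univ y) (by norm_num) (by norm_num) (by norm_num)
    rcases le_total (c - ρ x) 0 with hx | hx
    · rw [max_eq_left hx, zero_mul]
      exact sq_nonneg _
    rcases le_total (c - ρ y) 0 with hy | hy
    · rw [max_eq_left hy, mul_zero]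
      exact sq_nonneg _
    rw [max_eq_right hx, max_eq_right hy, max_eq_right (by linarith)]
    calc (c - ρ x) * (c - ρ y) ≤ (2⁻¹ * (c - ρ x) + 2⁻¹ * (c - ρ y)) ^ 2 := by
          nlinarith [sq_nonneg (ρ x - ρ y)]
      _ ≤ (c - ρ (midpoint ℝ x y)) ^ 2 := pow_le_pow_left₀ (by linarith) (by linarith) 2

end Algebra

section Anderson

variable {E : Type*} [NormedAddCommGroup E] [InnerProductSpace ℝ E] [FiniteDimensional ℝ E]
  [MeasurableSpace E] [BorelSpace E] {f ψ : E → ℝ}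

theorem lintegral_add_mul_le (hf : EvenLogConcave f) (hψ : EvenLogConcave ψ)
    (hf_meas : Measurable f) (hψ_meas : Measurable ψ) (v : E) :
    ∫⁻ x, ENNReal.ofReal (f (x + v) * ψ x) ≤ ∫⁻ x, ENNReal.ofReal (f x * ψ x) := by
  have reflect :
      ∫⁻ x, ENNReal.ofReal (f (x - v) * ψ x) = ∫⁻ x, ENNReal.ofReal (f (x + v) * ψ x) := by
    rw [← lintegral_neg_eq_self]
    refine lintegral_congr fun x ↦ ?_
    rw [← hf.even, hψ.even, neg_sub, sub_neg_eq_add, add_comm]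
  rw [← ENNReal.pow_le_pow_left_iff two_ne_zero, sq]
  nth_rw 2 [← reflect]
  refine SatisfiesPrekopaLeindler.of_finiteDimensional E (by fun_prop) (by fun_prop) (by fun_prop)
    fun x y ↦ ?_
  have hv : midpoint ℝ (x + v) (y - v) = midpoint ℝ x y := by
    rw [midpoint_eq_smul_add, midpoint_eq_smul_add, add_add_sub_cancel]
  rw [← ENNReal.ofReal_mul (mul_nonneg (hf.nonneg _) (hψ.nonneg _)),
    ← ENNReal.ofReal_pow (mul_nonneg (hf.nonneg _) (hψ.nonneg _)), mul_mul_mul_comm, mul_pow]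
  refine ENNReal.ofReal_le_ofReal (mul_le_mul (hv ▸ hf.mul_le _ _) (hψ.mul_le x y)
    (mul_nonneg (hψ.nonneg _) (hψ.nonneg _)) (sq_nonneg _))

theorem integral_add_mul_le (hf : EvenLogConcave f) (hψ : EvenLogConcave ψ)
    (hf_cont : Continuous f) (hψ_cont : Continuous ψ) (hψ_supp : HasCompactSupport ψ) (v : E) :
    ∫ x, f (x + v) * ψ x ≤ ∫ x, f x * ψ x := by
  have integrable : Integrable fun x ↦ f x * ψ x :=
    (hf_cont.mul hψ_cont).integrable_of_hasCompactSupport hψ_supp.mul_left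
  rw [integral_eq_lintegral_of_nonneg_ae (.of_forall fun x ↦ mul_nonneg (hf.nonneg _) (hψ.nonneg _))
      (by fun_prop), integral_eq_lintegral_of_nonneg_ae
      (.of_forall fun x ↦ mul_nonneg (hf.nonneg _) (hψ.nonneg _)) (by fun_prop)]
  exact ENNReal.toReal_mono integrable.lintegral_lt_top.ne
    (hf.lintegral_add_mul_le hψ hf_cont.measurable hψ_cont.measurable v)

theorem integral_sub_mul_sub_nonneg (hf : EvenLogConcave f) (hψ : EvenLogConcave ψ)
    (hf_cont : Continuous f) (hψ_cont : Continuous ψ) (hψ_supp : HasCompactSupport ψ) (v : E) :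
    0 ≤ ∫ x, (f (x + v) - f x) * (ψ (x + v) - ψ x) := by
  have integrable (u w : E) : Integrable fun x ↦ f (x + u) * ψ (x + w) :=
    (by fun_prop : Continuous fun x ↦ f (x + u) * ψ (x + w)).integrable_of_hasCompactSupport
      (hψ_supp.comp_homeomorph (Homeomorph.addRight w)).mul_left
  have shift (u w : E) : ∫ x, f (x + u) * ψ (x + w) ≤ ∫ x, f x * ψ x := by
    calc ∫ x, f (x + u) * ψ (x + w) = ∫ x, f (x + (u - w)) * ψ x := by
          rw [← integral_add_right_eq_self (fun x ↦ f (x + (u - w)) * ψ x) w]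
          simp [add_assoc]
      _ ≤ _ := hf.integral_add_mul_le hψ hf_cont hψ_cont hψ_supp _
  have shift_both : ∫ x, f (x + v) * ψ (x + v) = ∫ x, f x * ψ x :=
    integral_add_right_eq_self (fun x ↦ f x * ψ x) v
  calc 0 ≤ (∫ x, f (x + v) * ψ (x + v)) - (∫ x, f (x + v) * ψ (x + 0)) -
        ((∫ x, f (x + 0) * ψ (x + v)) - ∫ x, f (x + 0) * ψ (x + 0)) := by
        have := shift v 0
        have := shift 0 v
        simp only [add_zero] at *
        linarith
    _ = ∫ x, (f (x + v) - f x) * (ψ (x + v) - ψ x) := by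
        rw [← integral_sub (integrable v v) (integrable v 0),
          ← integral_sub (integrable 0 v) (integrable 0 0)]
        refine (integral_sub ((integrable v v).sub (integrable v 0))
          ((integrable 0 v).sub (integrable 0 0))).symm.trans (integral_congr_ae (.of_forall ?_))
        intro x
        simp only [add_zero, Pi.sub_apply]
        ring

end Anderson

end EvenLogConcave

section LineDeriv

variable {E : Type*} [NormedAddCommGroup E] [NormedSpace ℝ E] {f ψ : E → ℝ} {C D : ℝ≥0}

theorem norm_inv_smul_sub_le_of_lipschitzWith (hf : LipschitzWith C f) (x v : E) (t : ℝ) :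
    ‖t⁻¹ • (f (x + t • v) - f x)‖ ≤ C * ‖v‖ := by
  rcases eq_or_ne t 0 with rfl | ht
  · simpa using by positivity
  · calc ‖t⁻¹ • (f (x + t • v) - f x)‖ ≤ ‖t‖⁻¹ * (C * ‖x + t • v - x‖) := by
          rw [norm_smul, norm_inv]
          gcongr
          exact hf.norm_sub_le _ _
      _ = C * ‖v‖ := by
          rw [add_sub_cancel_left, norm_smul, mul_left_comm,
            inv_mul_cancel_left₀ (norm_ne_zero_iff.2 ht)]

theorem add_smul_notMem_of_notMem_cthickening {s : Set E} {x v : E} {t : ℝ} (ht : |t| ≤ 1)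
    (hx : x ∉ cthickening ‖v‖ s) : x + t • v ∉ s := by
  contrapose! hx
  refine mem_cthickening_of_dist_le _ _ _ _ hx ?_
  rw [dist_self_add_right, norm_smul]
  exact mul_le_of_le_one_left (norm_nonneg v) ht

variable [FiniteDimensional ℝ E] [MeasurableSpace E] [BorelSpace E] {μ : Measure E}
  [μ.IsAddHaarMeasure]

theorem tendsto_integral_inv_smul_sub_mul_inv_smul_sub (hf : LipschitzWith C f)
    (hψ : LipschitzWith D ψ) (hψ_supp : HasCompactSupport ψ) (v : E) :
    Tendsto (fun t : ℝ ↦ ∫ x, t⁻¹ • (f (x + t • v) - f x) * t⁻¹ • (ψ (x + t • v) - ψ x) ∂μ)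
      (𝓝[>] 0) (𝓝 (∫ x, lineDeriv ℝ f x v * lineDeriv ℝ ψ x v ∂μ)) := by
  have hK : IsCompact (cthickening ‖v‖ (tsupport ψ)) := hψ_supp.isCompact.cthickening
  have hf_cont := hf.continuous
  have hψ_cont := hψ.continuous
  refine tendsto_integral_filter_of_dominated_convergence
    ((cthickening ‖v‖ (tsupport ψ)).indicator fun _ ↦ C * ‖v‖ * (D * ‖v‖)) ?_ ?_ ?_ ?_
  · exact .of_forall fun t ↦ (by fun_prop : Continuous _).aestronglyMeasurable
  · filter_upwards [Ioc_mem_nhdsGT zero_lt_one] with t ht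
    refine .of_forall fun x ↦ ?_
    by_cases hx : x ∈ cthickening ‖v‖ (tsupport ψ)
    · rw [Set.indicator_of_mem hx, norm_mul]
      gcongr <;> apply norm_inv_smul_sub_le_of_lipschitzWith <;> assumption
    · have hx₀ : ψ x = 0 := image_eq_zero_of_notMem_tsupport fun h ↦
        hx (self_subset_cthickening _ h)
      have hxt : ψ (x + t • v) = 0 := image_eq_zero_of_notMem_tsupport <|
        add_smul_notMem_of_notMem_cthickening ((abs_of_pos ht.1).trans_le ht.2) hx
      simp [hx₀, hxt, hx]
  · exact (integrable_indicator_iff hK.measurableSet).2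
      (integrableOn_const hK.measure_lt_top.ne)
  · filter_upwards [hf.ae_lineDifferentiableAt v, hψ.ae_lineDifferentiableAt v] with x hfx hψx
    exact hfx.hasLineDerivAt.tendsto_slope_zero_right.mul
      hψx.hasLineDerivAt.tendsto_slope_zero_right

end LineDeriv

theorem EvenLogConcave.integral_lineDeriv_mul_lineDeriv_nonneg {E : Type*} [NormedAddCommGroup E]
    [InnerProductSpace ℝ E] [FiniteDimensional ℝ E] [MeasurableSpace E] [BorelSpace E]
    {f ψ : E → ℝ} {C D : ℝ≥0} (hf : EvenLogConcave f) (hψ : EvenLogConcave ψ)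
    (hf_lip : LipschitzWith C f) (hψ_lip : LipschitzWith D ψ) (hψ_supp : HasCompactSupport ψ)
    (v : E) : 0 ≤ ∫ x, lineDeriv ℝ f x v * lineDeriv ℝ ψ x v := by
  refine ge_of_tendsto' (tendsto_integral_inv_smul_sub_mul_inv_smul_sub hf_lip hψ_lip hψ_supp v)
    fun t ↦ ?_
  simp_rw [smul_mul_smul_comm, integral_smul]
  exact smul_nonneg (mul_self_nonneg _) (hf.integral_sub_mul_sub_nonneg hψ hf_lip.continuous
    hψ_lip.continuous hψ_supp (t • v))

section Shell

/-- The open spherical shell between the radii `r` and `R`, over which volume integrals are taken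
to isolate a sphere without introducing surface measure. -/
def shell (E : Type*) [Norm E] (r R : ℝ) : Set E := {x | ‖x‖ ∈ Set.Ioo r R}

/-- The even log-concave function whose derivative along `v` is `-2 * ⟪x, v⟫` on the shell between
the radii `r` and `R`, and zero outside the closure of the shell. -/
def shellPotential {E : Type*} [Norm E] (r R : ℝ) (x : E) : ℝ := max 0 (R ^ 2 - max r ‖x‖ ^ 2)

variable {E : Type*} [NormedAddCommGroup E] {r R : ℝ}

theorem isOpen_shell : IsOpen (shell E r R) := isOpen_Ioo.preimage continuous_norm

theorem shell_subset_closedBall : shell E r R ⊆ closedBall 0 R :=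
  fun _ hx ↦ mem_closedBall_zero_iff.2 hx.2.le

theorem volume_shell_ne_top [MeasureSpace E] [ProperSpace E]
    [IsFiniteMeasureOnCompacts (volume : Measure E)] : volume (shell E r R) ≠ ∞ :=
  ((measure_mono shell_subset_closedBall).trans_lt measure_closedBall_lt_top).ne

theorem evenLogConcave_shellPotential [NormedSpace ℝ E] :
    EvenLogConcave (shellPotential r R : E → ℝ) := by
  refine .max_zero_sub (((convexOn_const r convex_univ).sup convexOn_univ_norm).pow
    (fun x _ ↦ ?_) 2) (fun x ↦ ?_) (R ^ 2)
  · exact le_max_of_le_right (norm_nonneg x)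
  · simp

theorem shellPotential_eq_sub_min_sq (hR : 0 ≤ R) (x : E) :
    shellPotential r R x = R ^ 2 - min R (max r ‖x‖) ^ 2 := by
  have max_nonneg : 0 ≤ max r ‖x‖ := le_max_of_le_right (norm_nonneg x)
  rcases le_total R (max r ‖x‖) with h | h
  · rw [shellPotential, min_eq_left h, sub_self, max_eq_left]
    exact sub_nonpos.2 (pow_le_pow_left₀ hR h 2)
  · rw [shellPotential, min_eq_right h, max_eq_right]
    exact sub_nonneg.2 (pow_le_pow_left₀ max_nonneg h 2)

theorem lipschitzWith_shellPotential (R : ℝ≥0) :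
    LipschitzWith (2 * R) (shellPotential r R : E → ℝ) := by
  have lipschitz_min : LipschitzWith 1 fun x : E ↦ min (R : ℝ) (max r ‖x‖) :=
    (lipschitzWith_one_norm.const_max r).const_min R
  have min_nonneg (x : E) : 0 ≤ min (R : ℝ) (max r ‖x‖) :=
    le_min R.coe_nonneg (le_max_of_le_right (norm_nonneg x))
  refine LipschitzWith.of_dist_le_mul fun x y ↦ ?_
  have hxy := lipschitz_min.dist_le_mul x y
  rw [NNReal.coe_one, one_mul] at hxy
  rw [shellPotential_eq_sub_min_sq R.coe_nonneg, shellPotential_eq_sub_min_sq R.coe_nonneg,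
    dist_sub_left, Real.dist_eq, sq_sub_sq, abs_mul]
  gcongr ?_ * ?_
  · rw [abs_of_nonneg (add_nonneg (min_nonneg x) (min_nonneg y))]
    push_cast
    linarith [min_le_left (R : ℝ) (max r ‖x‖), min_le_left (R : ℝ) (max r ‖y‖)]
  · exact hxy

theorem shellPotential_eq_zero (hR : 0 ≤ R) {x : E} (hx : R ≤ ‖x‖) : shellPotential r R x = 0 :=
  max_eq_left (sub_nonpos.2 (pow_le_pow_left₀ hR (le_max_of_le_right hx) 2))

theorem hasCompactSupport_shellPotential [ProperSpace E] (hR : 0 ≤ R) :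
    HasCompactSupport (shellPotential r R : E → ℝ) :=
  .intro (isCompact_closedBall 0 R) fun _ hx ↦
    shellPotential_eq_zero hR (not_le.1 (mt mem_closedBall_zero_iff.2 hx)).le

variable [InnerProductSpace ℝ E]

theorem lineDeriv_shellPotential (hR : 0 ≤ R) {x : E} (hxr : ‖x‖ ≠ r) (hxR : ‖x‖ ≠ R) (v : E) :
    lineDeriv ℝ (shellPotential r R) x v = (shell E r R).indicator (fun x ↦ -2 * ⟪x, v⟫) x := by
  rcases hxr.lt_or_gt with hr_lt | hr_gt
  · have const : shellPotential r R =ᶠ[𝓝 x] fun _ ↦ max 0 (R ^ 2 - r ^ 2) := by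
      filter_upwards [(isOpen_Iio.preimage continuous_norm).mem_nhds hr_lt] with y (hy : ‖y‖ < r)
      rw [shellPotential, max_eq_left hy.le]
    rw [const.lineDeriv_eq, lineDeriv, deriv_const,
      Set.indicator_of_notMem fun h ↦ h.1.not_gt hr_lt]
  rcases hxR.lt_or_gt with hR_gt | hR_lt
  · have hx : x ∈ shell E r R := ⟨hr_gt, hR_gt⟩
    have quadratic : shellPotential r R =ᶠ[𝓝 x] fun y ↦ R ^ 2 - ‖y‖ ^ 2 := by
      filter_upwards [isOpen_shell.mem_nhds hx] with y hy
      rw [shellPotential, max_eq_right hy.1.le, max_eq_right]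
      exact sub_nonneg.2 (pow_le_pow_left₀ (norm_nonneg y) hy.2.le 2)
    rw [quadratic.lineDeriv_eq, Set.indicator_of_mem hx]
    have := (hasStrictFDerivAt_norm_sq x).hasFDerivAt.const_sub (R ^ 2)
    simpa using (this.hasLineDerivAt v).lineDeriv
  · have zero : shellPotential r R =ᶠ[𝓝 x] fun _ ↦ 0 := by
      filter_upwards [(isOpen_Ioi.preimage continuous_norm).mem_nhds hR_lt] with y (hy : R < ‖y‖)
      exact shellPotential_eq_zero hR hy.le
    rw [zero.lineDeriv_eq, lineDeriv, deriv_const,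
      Set.indicator_of_notMem fun h ↦ h.2.not_gt hR_lt]

variable [FiniteDimensional ℝ E] [MeasurableSpace E] [BorelSpace E] [Nontrivial E]

theorem EvenLogConcave.setIntegral_shell_inner_mul_lineDeriv_nonpos {f : E → ℝ} {C : ℝ≥0}
    (hf : EvenLogConcave f) (hf_lip : LipschitzWith C f) (hR : 0 ≤ R) (v : E) :
    ∫ x in shell E r R, ⟪x, v⟫ * lineDeriv ℝ f x v ≤ 0 := by
  lift R to ℝ≥0 using hR
  have correlation := hf.integral_lineDeriv_mul_lineDeriv_nonneg evenLogConcave_shellPotential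
    hf_lip (lipschitzWith_shellPotential (r := r) R)
    (hasCompactSupport_shellPotential R.coe_nonneg) v
  have norm_ne (s : ℝ) : ∀ᵐ x : E, ‖x‖ ≠ s := by
    filter_upwards [measure_eq_zero_iff_ae_notMem.1 (Measure.addHaar_sphere volume (0 : E) s)]
      with x hx using mt mem_sphere_zero_iff_norm.2 hx
  have integral_eq : ∫ x, lineDeriv ℝ f x v * lineDeriv ℝ (shellPotential r R) x v =
      -2 * ∫ x in shell E r R, ⟪x, v⟫ * lineDeriv ℝ f x v := by
    rw [← integral_const_mul, ← integral_indicator isOpen_shell.measurableSet]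
    refine integral_congr_ae ?_
    filter_upwards [norm_ne r, norm_ne R] with x hxr hxR
    rw [lineDeriv_shellPotential R.coe_nonneg hxr hxR]
    by_cases hx : x ∈ shell E r R
    · simp only [Set.indicator_of_mem hx]
      ring
    · simp [hx]
  linarith

end Shell

theorem hasDerivAt_integral_comp_add_smul {α E : Type*} [MeasurableSpace α] {μ : Measure α}
    [NormedAddCommGroup E] [NormedSpace ℝ E] [FiniteDimensional ℝ E] [MeasurableSpace E]
    [BorelSpace E] {f : E → ℝ} {C : ℝ≥0} (hf : LipschitzWith C f) {X V : α → E} {t : ℝ}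
    (hX : Measurable X) (hV : Measurable V) (hV_int : Integrable V μ)
    (hf_int : Integrable (fun a ↦ f (X a + t • V a)) μ)
    (hf_diff : ∀ᵐ a ∂μ, DifferentiableAt ℝ f (X a + t • V a)) :
    HasDerivAt (fun s : ℝ ↦ ∫ a, f (X a + s • V a) ∂μ)
      (∫ a, fderiv ℝ f (X a + t • V a) (V a) ∂μ) t := by
  have hf_meas := hf.continuous.measurable
  have path_lipschitz (a : α) :
      LipschitzWith (Real.nnabs (C * ‖V a‖)) fun s : ℝ ↦ f (X a + s • V a) := by
    refine LipschitzWith.of_dist_le_mul fun s u ↦ (hf.dist_le_mul _ _).trans_eq ?_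
    rw [dist_add_left, dist_eq_norm, ← sub_smul, norm_smul, ← dist_eq_norm, Real.coe_nnabs,
      abs_of_nonneg (by positivity)]
    ring
  refine (hasDerivAt_integral_of_dominated_loc_of_lip univ_mem
    (.of_forall fun s ↦ (by fun_prop : Measurable _).aestronglyMeasurable) hf_int ?_
    (.of_forall fun a ↦ (path_lipschitz a).lipschitzOnWith) (hV_int.norm.const_mul C) ?_).2
  · have fderiv_meas : Measurable fun a ↦ fderiv ℝ f (X a + t • V a) :=
      (measurable_fderiv ℝ f).comp (by fun_prop)
    exact (isBoundedBilinearMap_apply.continuous.measurable.comp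
      (fderiv_meas.prodMk hV)).aestronglyMeasurable
  · filter_upwards [hf_diff] with a ha
    have path : HasDerivAt (fun s : ℝ ↦ X a + s • V a) (V a) t := by
      simpa using ((hasDerivAt_id t).smul_const (V a)).const_add (X a)
    exact ha.hasFDerivAt.comp_hasDerivAt t path

section Contraction

variable {E : Type*} [NormedAddCommGroup E] [InnerProductSpace ℝ E] [FiniteDimensional ℝ E]
  {S : E →ₗ[ℝ] E} {t : ℝ}

theorem det_one_sub_smul_ne_zero (hS : (1 - S).IsPositive) (ht₀ : 0 ≤ t) (ht₁ : t < 1) :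
    LinearMap.det (1 - t • S) ≠ 0 := by
  intro hdet
  obtain ⟨x, hx, hx₀⟩ := SetLike.exists_of_lt (LinearMap.bot_lt_ker_of_det_eq_zero hdet)
  have hxS : x = t • S x := by simpa [sub_eq_zero] using hx
  have hSx : ⟪S x, x⟫ ≤ ⟪x, x⟫ := by simpa [inner_sub_left] using hS.inner_nonneg_left x
  have hxx : ⟪x, x⟫ = t * ⟪S x, x⟫ := by rw [← real_inner_smul_left, ← hxS]
  have hxpos : 0 < ⟪x, x⟫ := real_inner_self_pos.2 hx₀
  nlinarith

variable [MeasurableSpace E] [BorelSpace E]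

theorem integrableOn_shell_of_continuous {F : Type*} [NormedAddCommGroup F] {f : E → F}
    (hf : Continuous f) {r R : ℝ} : IntegrableOn f (shell E r R) :=
  hf.continuousOn.integrableOn_of_subset_isCompact (isCompact_closedBall 0 R)
    isOpen_shell.measurableSet shell_subset_closedBall volume_shell_ne_top

theorem integrableOn_shell_inner_mul_lineDeriv {f : E → ℝ} {C : ℝ≥0} (hf : LipschitzWith C f)
    (v w : E) {r R : ℝ} : IntegrableOn (fun x ↦ ⟪x, v⟫ * lineDeriv ℝ f x w) (shell E r R) :=
  (integrableOn_shell_of_continuous (f := fun x ↦ ⟪x, v⟫) (by fun_prop)).mul_bdd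
    (aestronglyMeasurable_lineDeriv hf.continuous _)
    (.of_forall fun _ ↦ norm_lineDeriv_le_of_lipschitz ℝ hf)

variable [Nontrivial E] {f : E → ℝ} {C : ℝ≥0} {r R : ℝ}

theorem EvenLogConcave.setIntegral_shell_fderiv_nonpos (hf : EvenLogConcave f)
    (hf_lip : LipschitzWith C f) (hR : 0 ≤ R) (hS : S.IsPositive) (hS₁ : (1 - S).IsPositive)
    (ht₀ : 0 ≤ t) (ht₁ : t < 1) :
    ∫ x in shell E r R, fderiv ℝ f ((1 - t • S) x) (S x) ≤ 0 := by
  set A := 1 - t • S with hA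
  set b := hS.isSymmetric.eigenvectorBasis rfl
  set s := hS.isSymmetric.eigenvalues rfl
  have hSb (i) : S (b i) = s i • b i := hS.isSymmetric.apply_eigenvectorBasis rfl i
  have hs₀ (i) : 0 ≤ s i := hS.nonneg_eigenvalues rfl i
  have hs₁ (i) : s i ≤ 1 := by
    simpa [inner_sub_left, hSb, inner_smul_left] using hS₁.inner_nonneg_left (b i)
  have hτ (i) : 0 < 1 - t * s i := by nlinarith [hs₀ i, hs₁ i]
  have hAb (i) : A (b i) = (1 - t * s i) • b i := by simp [hA, hSb, sub_smul, mul_smul]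
  have comp_lip : LipschitzWith _ fun y ↦ f (A y) := hf_lip.comp A.toContinuousLinearMap.lipschitz
  have fderiv_eq_sum : (fun x ↦ fderiv ℝ f (A x) (S x)) =ᵐ[volume] fun x ↦
      ∑ i, s i / (1 - t * s i) * (⟪x, b i⟫ * lineDeriv ℝ (fun y ↦ f (A y)) x (b i)) := by
    have hA_det := det_one_sub_smul_ne_zero hS₁ ht₀ ht₁
    filter_upwards [(Measure.LinearMap.quasiMeasurePreserving volume A hA_det).ae
      hf_lip.ae_differentiableAt] with x hx
    have lineDeriv_eq (i) : lineDeriv ℝ (fun y ↦ f (A y)) x (b i) =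
        (1 - t * s i) * fderiv ℝ f (A x) (b i) := by
      have := hx.hasFDerivAt.comp x A.toContinuousLinearMap.hasFDerivAt
      simpa [hAb, Function.comp_def] using (this.hasLineDerivAt (b i)).lineDeriv
    have hSx : S x = ∑ i, ⟪b i, x⟫ • s i • b i := by
      simpa only [map_sum, map_smul, hSb] using congrArg S (b.sum_repr' x).symm
    simp only [hSx, map_sum, map_smul, lineDeriv_eq, smul_eq_mul]
    refine Finset.sum_congr rfl fun i _ ↦ ?_
    rw [real_inner_comm, div_mul_eq_mul_div, eq_div_iff (hτ i).ne']
    ring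
  rw [integral_congr_ae (ae_restrict_of_ae fderiv_eq_sum), integral_finsetSum _ fun i _ ↦
    (integrableOn_shell_inner_mul_lineDeriv comp_lip _ _).const_mul _]
  refine Finset.sum_nonpos fun i _ ↦ ?_
  rw [integral_const_mul]
  exact mul_nonpos_of_nonneg_of_nonpos (div_nonneg (hs₀ i) (hτ i).le)
    ((hf.comp_linearMap A).setIntegral_shell_inner_mul_lineDeriv_nonpos comp_lip hR (b i))

theorem EvenLogConcave.setIntegral_shell_le_comp (hf : EvenLogConcave f)
    (hf_lip : LipschitzWith C f) (hR : 0 ≤ R) {T : E →ₗ[ℝ] E} (hT : T.IsPositive)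
    (hT₁ : (1 - T).IsPositive) :
    ∫ x in shell E r R, f x ≤ ∫ x in shell E r R, f (T x) := by
  obtain ⟨S, rfl⟩ : ∃ S, T = 1 - S := ⟨1 - T, by abel⟩
  rw [sub_sub_cancel] at hT₁
  have hS_cont : Continuous S := S.continuous_of_finiteDimensional
  have hf_cont := hf_lip.continuous
  have continuous_integral :
      Continuous fun t : ℝ ↦ ∫ x in shell E r R, f (x + t • -S x) := by
    have := continuous_parametric_integral_of_continuous (μ := volume.restrict (shell E r R))
      (f := fun (t : ℝ) x ↦ f (x + t • -S x)) (by fun_prop) (isCompact_closedBall (0 : E) R)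
    simpa only [Measure.restrict_restrict measurableSet_closedBall,
      Set.inter_eq_right.2 shell_subset_closedBall] using this
  have hasDerivAt_integral {t : ℝ} (ht₀ : 0 ≤ t) (ht₁ : t < 1) :
      HasDerivAt (fun t : ℝ ↦ ∫ x in shell E r R, f (x + t • -S x))
        (∫ x in shell E r R, fderiv ℝ f (x + t • -S x) (-S x)) t := by
    refine hasDerivAt_integral_comp_add_smul hf_lip measurable_id hS_cont.measurable.neg
      (integrableOn_shell_of_continuous hS_cont.neg)
      (integrableOn_shell_of_continuous (by fun_prop)) (ae_restrict_of_ae ?_)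
    filter_upwards [(Measure.LinearMap.quasiMeasurePreserving volume (1 - t • S)
      (det_one_sub_smul_ne_zero hT ht₀ ht₁)).ae hf_lip.ae_differentiableAt] with x hx
    simpa [sub_eq_add_neg] using hx
  have mono : MonotoneOn (fun t : ℝ ↦ ∫ x in shell E r R, f (x + t • -S x)) (Set.Icc 0 1) := by
    refine monotoneOn_of_deriv_nonneg (convex_Icc 0 1) continuous_integral.continuousOn ?_ ?_
    all_goals rw [interior_Icc]; intro t ht
    · exact (hasDerivAt_integral ht.1.le ht.2).differentiableAt.differentiableWithinAt
    · rw [(hasDerivAt_integral ht.1.le ht.2).deriv]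
      have := hf.setIntegral_shell_fderiv_nonpos (r := r) hf_lip hR hT₁ hT ht.1.le ht.2
      simpa [integral_neg, sub_eq_add_neg] using this
  simpa [sub_eq_add_neg] using
    mono (Set.left_mem_Icc.2 zero_le_one) (Set.right_mem_Icc.2 zero_le_one) zero_le_one

end Contraction

theorem EvenLogConcave.le_apply_zero {E : Type*} [AddCommGroup E] [Module ℝ E] {f : E → ℝ}
    (hf : EvenLogConcave f) (x : E) : f x ≤ f 0 := by
  have := hf.mul_le x (-x)
  rw [hf.even, midpoint_self_neg, ← sq] at this
  exact le_of_sq_le_sq this (hf.nonneg 0)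

theorem EvenLogConcave.integrable {E : Type*} [AddCommGroup E] [Module ℝ E] [MeasurableSpace E]
    {μ : Measure E} [IsFiniteMeasure μ] {f : E → ℝ} (hf : EvenLogConcave f)
    (hf_meas : AEStronglyMeasurable f μ) : Integrable f μ :=
  .of_bound hf_meas (f 0) (.of_forall fun x ↦
    (Real.norm_of_nonneg (hf.nonneg x)).trans_le (hf.le_apply_zero x))

/-- A measure is spherical if its characteristic function is radial, that is, if it is elliptical
with location `0` and dispersion the identity. -/
def IsSpherical {E : Type*} [NormedAddCommGroup E] [InnerProductSpace ℝ E] [MeasurableSpace E]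
    (μ : Measure E) : Prop :=
  ∀ u v : E, ‖u‖ = ‖v‖ → charFun μ u = charFun μ v

theorem IsSpherical.charFun_norm_smul {E : Type*} [NormedAddCommGroup E] [InnerProductSpace ℝ E]
    [MeasurableSpace E] {μ : Measure E} (hμ : IsSpherical μ) (t z : E) :
    charFun μ (‖z‖ • t) = charFun μ (‖t‖ • z) :=
  hμ _ _ (by simp [norm_smul, mul_comm])

section Spherical

variable {E : Type*} [NormedAddCommGroup E] [InnerProductSpace ℝ E] [FiniteDimensional ℝ E]
  [MeasurableSpace E] [BorelSpace E] {r R : ℝ}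

theorem isSpherical_volume_restrict_shell : IsSpherical (volume.restrict (shell E r R)) := by
  intro u v huv
  obtain ⟨ρ, rfl⟩ : ∃ ρ : E ≃ₗᵢ[ℝ] E, ρ v = u :=
    ⟨_, Submodule.reflection_sub huv.symm⟩
  have preimage : ρ ⁻¹' shell E r R = shell E r R := by
    ext x
    simp [shell]
  rw [charFun_apply, charFun_apply]
  nth_rw 1 [← preimage]
  rw [← ρ.measurePreserving.setIntegral_preimage_emb
    ρ.toHomeomorph.measurableEmbedding (fun x ↦ Complex.exp (⟪x, ρ v⟫ * Complex.I))]
  simp [preimage]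

theorem integrable_exp_mul_I {α : Type*} [MeasurableSpace α] {μ : Measure α} [IsFiniteMeasure μ]
    {h : α → ℝ} (hh : Measurable h) : Integrable (fun a ↦ Complex.exp (h a * Complex.I)) μ :=
  .of_bound (by fun_prop) 1 (.of_forall fun a ↦ (Complex.norm_exp_ofReal_mul_I _).le)

variable {μ ν : Measure E} [IsFiniteMeasure μ] [IsFiniteMeasure ν]

theorem charFun_map_norm_snd_smul_fst (t : E) :
    charFun ((μ.prod ν).map fun p ↦ ‖p.2‖ • p.1) t = ∫ z, charFun μ (‖z‖ • t) ∂ν := by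
  rw [charFun_apply, integral_map (by fun_prop) (by fun_prop),
    integral_prod_symm _ (integrable_exp_mul_I (by fun_prop))]
  simp_rw [charFun_apply, real_inner_smul_left, real_inner_smul_right]

theorem integral_charFun_smul_comm (c : ℝ) :
    ∫ z, charFun μ (c • z) ∂ν = ∫ x, charFun ν (c • x) ∂μ := by
  simp_rw [charFun_apply]
  rw [integral_integral_swap (integrable_exp_mul_I (by fun_prop))]
  simp_rw [real_inner_smul_right, real_inner_comm]

namespace IsSpherical

theorem map_norm_snd_smul_fst_comm (hμ : IsSpherical μ) (hν : IsSpherical ν) :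
    (μ.prod ν).map (fun p ↦ ‖p.2‖ • p.1) = (ν.prod μ).map (fun p ↦ ‖p.2‖ • p.1) := by
  refine Measure.ext_of_charFun (funext fun t ↦ ?_)
  simp only [charFun_map_norm_snd_smul_fst, hμ.charFun_norm_smul t, hν.charFun_norm_smul t,
    integral_charFun_smul_comm]

theorem integral_integral_norm_smul_comm (hμ : IsSpherical μ) (hν : IsSpherical ν) {g : E → ℝ}
    (hg : Integrable g ((μ.prod ν).map fun p ↦ ‖p.2‖ • p.1)) :
    ∫ z, ∫ x, g (‖z‖ • x) ∂μ ∂ν = ∫ x, ∫ z, g (‖x‖ • z) ∂ν ∂μ := by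
  have map_eq := hμ.map_norm_snd_smul_fst_comm hν
  have hg' := map_eq ▸ hg
  calc ∫ z, ∫ x, g (‖z‖ • x) ∂μ ∂ν
      = ∫ p : E × E, g (‖p.2‖ • p.1) ∂μ.prod ν :=
        (integral_prod_symm _ (hg.comp_measurable (by fun_prop))).symm
    _ = ∫ p : E × E, g (‖p.2‖ • p.1) ∂ν.prod μ := by
        rw [← integral_map (by fun_prop) hg.1, map_eq, integral_map (by fun_prop) hg'.1]
    _ = ∫ x, ∫ z, g (‖x‖ • z) ∂ν ∂μ :=
        integral_prod_symm _ (hg'.comp_measurable (by fun_prop))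

end IsSpherical

theorem nonneg_of_forall_setIntegral_shell_nonneg [Nontrivial E] {h : ℝ → ℝ} (hh : Continuous h)
    (hr : 0 ≤ r) (hh_int : ∀ R, r < R → 0 ≤ ∫ x in shell E r R, h ‖x‖) : 0 ≤ h r := by
  by_contra! hneg
  obtain ⟨R, hrR, hR⟩ : ∃ R > r, Set.Ioo r R ⊆ {s | h s < 0} :=
    mem_nhdsGT_iff_exists_Ioo_subset.1
      ((hh.continuousAt.eventually_lt continuousAt_const hneg).filter_mono nhdsWithin_le_nhds)
  have hpos : 0 < ∫ x in shell E r R, -h ‖x‖ := by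
    refine (setIntegral_pos_iff_support_of_nonneg_ae ?_ ?_).2 ?_
    · exact ae_restrict_of_forall_mem isOpen_shell.measurableSet fun x hx ↦
        neg_nonneg.2 (hR hx).le
    · exact integrableOn_shell_of_continuous (by fun_prop)
    · have shell_subset : shell E r R ⊆ Function.support fun x : E ↦ -h ‖x‖ :=
        fun x hx ↦ neg_ne_zero.2 (ne_of_lt (hR hx))
      rw [Set.inter_eq_right.2 shell_subset]
      obtain ⟨s, hs⟩ := exists_between hrR
      obtain ⟨x, rfl⟩ := exists_norm_eq E (hr.trans hs.1.le)
      exact isOpen_shell.measure_pos volume ⟨x, hs⟩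
  rw [integral_neg, neg_pos] at hpos
  exact hpos.not_ge (hh_int R hrR)

theorem IsSpherical.integral_nonneg_of_forall_setIntegral_shell [Nontrivial E]
    (hν : IsSpherical ν) {g : E → ℝ} (hg : Continuous g) {M : ℝ} (hM : ∀ x, ‖g x‖ ≤ M)
    (hg_shell : ∀ s R : ℝ, 1 < R → 0 ≤ ∫ x in shell E 1 R, g (s • x)) : 0 ≤ ∫ x, g x ∂ν := by
  have g_int (ρ : Measure E) [IsFiniteMeasure ρ] : Integrable g ρ :=
    .of_bound hg.aestronglyMeasurable M (.of_forall hM)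
  have scaled_cont : Continuous fun s : ℝ ↦ ∫ z, g (s • z) ∂ν :=
    continuous_of_dominated (fun s ↦ (hg.comp (continuous_id.const_smul s)).aestronglyMeasurable)
      (fun s ↦ .of_forall fun z ↦ hM (s • z)) (integrable_const M)
      (.of_forall fun z ↦ hg.comp (continuous_id.smul continuous_const))
  simpa only [one_smul] using nonneg_of_forall_setIntegral_shell_nonneg (E := E) scaled_cont
    zero_le_one fun R hR ↦ by
      have : IsFiniteMeasure (volume.restrict (shell E 1 R)) :=
        isFiniteMeasure_restrict.2 volume_shell_ne_top
      rw [← isSpherical_volume_restrict_shell.integral_integral_norm_smul_comm hν (g_int _)]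
      exact integral_nonneg fun z ↦ hg_shell ‖z‖ R hR

theorem IsSpherical.integral_le_comp (hν : IsSpherical ν) {f : E → ℝ} {C : ℝ≥0}
    (hf : EvenLogConcave f) (hf_lip : LipschitzWith C f) {T : E →ₗ[ℝ] E} (hT : T.IsPositive)
    (hT₁ : (1 - T).IsPositive) : ∫ x, f x ∂ν ≤ ∫ x, f (T x) ∂ν := by
  rcases subsingleton_or_nontrivial E with _ | _
  · simp [Subsingleton.elim _ (0 : E)]
  have hf_cont := hf_lip.continuous
  have hT_cont : Continuous T := T.continuous_of_finiteDimensional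
  rw [← sub_nonneg, ← integral_sub
    ((hf.comp_linearMap T).integrable (hf_cont.comp hT_cont).aestronglyMeasurable)
    (hf.integrable hf_cont.aestronglyMeasurable)]
  refine hν.integral_nonneg_of_forall_setIntegral_shell (by fun_prop) (M := f 0) (fun x ↦ ?_)
    fun s R hR ↦ ?_
  · rw [Real.norm_eq_abs, abs_sub_le_iff]
    constructor <;> linarith [hf.nonneg x, hf.nonneg (T x), hf.le_apply_zero x,
      hf.le_apply_zero (T x)]
  · have scaled_lip : LipschitzWith _ fun x : E ↦ f (s • x) := hf_lip.comp (lipschitzWith_smul s)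
    have := (hf.comp_linearMap (s • LinearMap.id)).setIntegral_shell_le_comp (r := 1) (R := R)
      scaled_lip (by linarith) hT hT₁
    rw [integral_sub (integrableOn_shell_of_continuous (by fun_prop))
      (integrableOn_shell_of_continuous (by fun_prop)), sub_nonneg]
    simpa using this

end Spherical

theorem convexOn_infDist {E : Type*} [SeminormedAddCommGroup E] [NormedSpace ℝ E] {s : Set E}
    (hs : Convex ℝ s) (hs_ne : s.Nonempty) : ConvexOn ℝ Set.univ (infDist · s) := by
  refine ⟨convex_univ, fun x _ y _ a b ha hb hab ↦ le_of_forall_pos_lt_add fun ε hε ↦ ?_⟩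
  obtain ⟨p, hps, hp⟩ := (infDist_lt_iff hs_ne).1 (lt_add_of_pos_right (infDist x s) hε)
  obtain ⟨q, hqs, hq⟩ := (infDist_lt_iff hs_ne).1 (lt_add_of_pos_right (infDist y s) hε)
  refine (infDist_le_dist_of_mem (hs hps hqs ha hb hab)).trans_lt ?_
  calc dist (a • x + b • y) (a • p + b • q) ≤ a * dist x p + b * dist y q := by
        refine (dist_add_add_le _ _ _ _).trans_eq ?_
        rw [dist_smul₀, dist_smul₀, Real.norm_of_nonneg ha, Real.norm_of_nonneg hb]
    _ < a * (infDist x s + ε) + b * (infDist y s + ε) := by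
        rcases ha.eq_or_lt with rfl | ha
        · simp only [zero_add] at hab
          simpa [hab] using hq
        · exact add_lt_add_of_lt_of_le (mul_lt_mul_of_pos_left hp ha) (by gcongr)
    _ = a • infDist x s + b • infDist y s + ε := by
        simp only [smul_eq_mul]
        linear_combination ε * hab

theorem infDist_neg {E : Type*} [SeminormedAddCommGroup E] (x : E) (s : Set E) :
    infDist (-x) s = infDist x (-s) := by
  rw [infDist, infDist, infEDist_neg]

theorem evenLogConcave_max_zero_sub_infDist {E : Type*} [SeminormedAddCommGroup E]
    [NormedSpace ℝ E] {s : Set E} (hs : Convex ℝ s) (hs_ne : s.Nonempty) (hs_symm : -s = s)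
    (δ : ℝ) : EvenLogConcave fun x ↦ max 0 (δ - infDist x s) :=
  .max_zero_sub (convexOn_infDist hs hs_ne) (fun x ↦ by simp only [infDist_neg, hs_symm]) δ

theorem isCompact_convexHull {E : Type*} [AddCommGroup E] [Module ℝ E] [TopologicalSpace E]
    [ContinuousAdd E] [ContinuousSMul ℝ E] [FiniteDimensional ℝ E] {s : Set E}
    (hs : IsCompact s) : IsCompact (convexHull ℝ s) := by
  have caratheodory : convexHull ℝ s = ⋃ m ∈ Finset.range (Module.finrank ℝ E + 2),
      (fun p : (Fin m → ℝ) × (Fin m → E) ↦ ∑ i, p.1 i • p.2 i) ''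
        (stdSimplex ℝ (Fin m) ×ˢ Set.univ.pi fun _ ↦ s) := by
    refine Set.Subset.antisymm (fun x hx ↦ ?_) (Set.iUnion₂_subset ?_)
    · obtain ⟨ι, _, z, w, hzs, hz, hw, hw₁, rfl⟩ := eq_pos_convex_span_of_mem_convexHull hx
      let e := (Fintype.equivFin ι).symm
      refine Set.mem_biUnion (x := Fintype.card ι) ?_ ⟨(w ∘ e, z ∘ e), ⟨⟨?_, ?_⟩, ?_⟩, ?_⟩
      · have := hz.card_le_finrank_succ
        have := Submodule.finrank_le (vectorSpan ℝ (Set.range z))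
        exact Finset.mem_range.2 (by lia)
      · exact fun i ↦ (hw (e i)).le
      · exact (e.sum_comp w).trans hw₁
      · exact fun i _ ↦ hzs (Set.mem_range_self _)
      · exact e.sum_comp fun i ↦ w i • z i
    · rintro m - _ ⟨p, ⟨⟨hw, hw₁⟩, hz⟩, rfl⟩
      exact (convex_convexHull ℝ s).sum_mem (fun i _ ↦ hw i) hw₁
        fun i _ ↦ subset_convexHull ℝ s (hz i trivial)
  rw [caratheodory]
  refine (Finset.finite_toSet _).isCompact_biUnion fun m _ ↦ ?_
  exact ((isCompact_stdSimplex ℝ (Fin m)).prod (isCompact_univ_pi fun _ ↦ hs)).image (by fun_prop)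

namespace IsSpherical

variable {E : Type*} [NormedAddCommGroup E] [InnerProductSpace ℝ E] [FiniteDimensional ℝ E]
  [MeasurableSpace E] [BorelSpace E] {ν : Measure E} [IsFiniteMeasure ν] {C : Set E}
  {T : E →ₗ[ℝ] E}

theorem measureReal_le_preimage_cthickening (hν : IsSpherical ν) (hC_conv : Convex ℝ C)
    (hC_ne : C.Nonempty) (hC_symm : -C = C) (hT : T.IsPositive) (hT₁ : (1 - T).IsPositive)
    {δ : ℝ} (hδ : 0 < δ) : ν.real C ≤ ν.real (T ⁻¹' cthickening δ C) := by
  set f : E → ℝ := fun x ↦ max 0 (δ - infDist x C) with hf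
  have f_elc : EvenLogConcave f := evenLogConcave_max_zero_sub_infDist hC_conv hC_ne hC_symm δ
  have f_lip : LipschitzWith 1 f := by
    refine (LipschitzWith.of_dist_le_mul fun x y ↦ ?_).const_max 0
    rw [dist_sub_left]
    exact (lipschitz_infDist_pt C).dist_le_mul x y
  have f_of_mem {x : E} (hx : x ∈ C) : δ ≤ f x := by simp [hf, infDist_zero_of_mem hx]
  have f_of_notMem {x : E} (hx : x ∉ cthickening δ C) : f x = 0 := by
    contrapose! hx
    have infDist_lt : infDist x C < δ := by
      by_contra! hle
      exact hx (max_eq_left (sub_nonpos.2 hle))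
    obtain ⟨y, hyC, hy⟩ := (infDist_lt_iff hC_ne).1 infDist_lt
    exact mem_cthickening_of_dist_le x y δ C hyC hy.le
  have f_le (x : E) : ‖f x‖ ≤ δ := by
    rw [Real.norm_of_nonneg (f_elc.nonneg x)]
    exact max_le hδ.le (sub_le_self δ infDist_nonneg)
  refine le_of_mul_le_mul_left ?_ hδ
  calc δ * ν.real C ≤ δ * ν.real {x | δ ≤ f x} :=
        mul_le_mul_of_nonneg_left (measureReal_mono (fun _ ↦ f_of_mem) (measure_ne_top _ _)) hδ.le
    _ ≤ ∫ x, f x ∂ν := mul_meas_ge_le_integral_of_nonneg (.of_forall f_elc.nonneg)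
        (f_elc.integrable f_lip.continuous.aestronglyMeasurable) δ
    _ ≤ ∫ x, f (T x) ∂ν := hν.integral_le_comp f_elc f_lip hT hT₁
    _ = ∫ x in T ⁻¹' cthickening δ C, f (T x) ∂ν :=
        (setIntegral_eq_integral_of_forall_compl_eq_zero fun x hx ↦
          f_of_notMem (x := T x) hx).symm
    _ ≤ δ * ν.real (T ⁻¹' cthickening δ C) := (Real.le_norm_self _).trans
        (norm_setIntegral_le_of_norm_le_const (measure_lt_top _ _) fun x _ ↦ f_le (T x))

theorem measure_le_preimage_of_isCompact (hν : IsSpherical ν) (hC : IsCompact C)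
    (hC_conv : Convex ℝ C) (hC_symm : -C = C) (hT : T.IsPositive) (hT₁ : (1 - T).IsPositive) :
    ν C ≤ ν (T ⁻¹' C) := by
  rcases C.eq_empty_or_nonempty with rfl | hC_ne
  · simp
  have hT_meas : Measurable T := T.continuous_of_finiteDimensional.measurable
  rw [← Measure.map_apply hT_meas hC.measurableSet]
  refine ge_of_tendsto ((tendsto_measure_cthickening_of_isCompact hC).mono_left
    (nhdsWithin_le_nhds (s := Set.Ioi 0))) ?_
  filter_upwards [self_mem_nhdsWithin] with δ hδ
  rw [Measure.map_apply hT_meas isClosed_cthickening.measurableSet]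
  exact (ENNReal.toReal_le_toReal (measure_ne_top _ _) (measure_ne_top _ _)).1
    (hν.measureReal_le_preimage_cthickening hC_conv hC_ne hC_symm hT hT₁ hδ)

theorem measure_le_preimage (hν : IsSpherical ν) (hC : MeasurableSet C)
    (hC_conv : Convex ℝ C) (hC_symm : -C = C) (hT : T.IsPositive) (hT₁ : (1 - T).IsPositive) :
    ν C ≤ ν (T ⁻¹' C) := by
  refine le_of_forall_lt fun r hr ↦ ?_
  obtain ⟨K, hKC, hK, hrK⟩ := hC.exists_lt_isCompact hr
  have hull_subset : convexHull ℝ (K ∪ -K) ⊆ C :=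
    convexHull_min (Set.union_subset hKC (hC_symm ▸ Set.neg_subset_neg.2 hKC)) hC_conv
  have hull_symm : -convexHull ℝ (K ∪ -K) = convexHull ℝ (K ∪ -K) := by
    rw [← convexHull_neg, Set.union_neg, neg_neg, Set.union_comm]
  calc r < ν K := hrK
    _ ≤ ν (convexHull ℝ (K ∪ -K)) := measure_mono
        (Set.subset_union_left.trans (subset_convexHull ℝ _))
    _ ≤ ν (T ⁻¹' convexHull ℝ (K ∪ -K)) := hν.measure_le_preimage_of_isCompact
        (isCompact_convexHull (hK.union hK.neg)) (convex_convexHull ℝ _) hull_symm hT hT₁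
    _ ≤ ν (T ⁻¹' C) := measure_mono (Set.preimage_mono hull_subset)

end IsSpherical

section Operators

variable {E F : Type*} [NormedAddCommGroup E] [InnerProductSpace ℝ E]
  [NormedAddCommGroup F] [InnerProductSpace ℝ F] {A B T : E →ₗ[ℝ] E}

theorem inner_mul_self_apply_self (hT : T.IsSymmetric) (x : E) : ⟪(T * T) x, x⟫ = ‖T x‖ ^ 2 := by
  rw [Module.End.mul_apply, hT, real_inner_self_eq_norm_sq]

theorem isPositive_one_sub_of_forall_norm_le (hT : T.IsPositive) (hT_norm : ∀ x, ‖T x‖ ≤ ‖x‖) :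
    (1 - T).IsPositive := by
  refine (LinearMap.isPositive_iff _).2
    ⟨LinearMap.isPositive_one.isSymmetric.sub hT.isSymmetric, fun x ↦ ?_⟩
  have h : ⟪T x, x⟫ ≤ ‖x‖ * ‖x‖ :=
    (real_inner_le_norm _ _).trans (by gcongr; exact hT_norm x)
  rw [LinearMap.sub_apply, Module.End.one_apply, inner_sub_left, real_inner_self_eq_norm_mul_norm]
  exact sub_nonneg.2 h

variable [FiniteDimensional ℝ E] [FiniteDimensional ℝ F]

theorem exists_isPositive_mul_self_eq (hA : A.IsPositive) :
    ∃ S : E →ₗ[ℝ] E, S.IsPositive ∧ S * S = A := by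
  let b := hA.isSymmetric.eigenvectorBasis rfl
  let s := hA.isSymmetric.eigenvalues rfl
  let S : E →ₗ[ℝ] E := ∑ i, √(s i) • (InnerProductSpace.rankOne ℝ (b i) (b i)).toLinearMap
  have hS_apply : ∀ j, S (b j) = √(s j) • b j := by
    intro j
    simp [S, LinearMap.sum_apply, b.inner_eq_ite]
  refine ⟨S, LinearMap.isPositive_sum _ fun i _ ↦
    LinearMap.IsPositive.smul_of_nonneg ?_ (Real.sqrt_nonneg _), b.toBasis.ext fun j ↦ ?_⟩
  · exact (ContinuousLinearMap.isPositive_toLinearMap_iff _).2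
      (InnerProductSpace.isPositive_rankOne_self _)
  · rw [OrthonormalBasis.coe_toBasis, Module.End.mul_apply, hS_apply, map_smul, hS_apply, smul_smul,
      Real.mul_self_sqrt (hA.nonneg_eigenvalues rfl j)]
    exact (hA.isSymmetric.apply_eigenvectorBasis rfl j).symm

theorem apply_eq_zero_of_inner_apply_self_eq_zero (hA : A.IsPositive) {x : E}
    (hx : ⟪A x, x⟫ = 0) : A x = 0 := by
  obtain ⟨S, hS, rfl⟩ := exists_isPositive_mul_self_eq hA
  rw [inner_mul_self_apply_self hS.isSymmetric, sq_eq_zero_iff, norm_eq_zero] at hx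
  rw [Module.End.mul_apply, hx, map_zero]

theorem exists_norm_sq_comp_eq_of_surjective (hA : A.IsPositive) {K : E →ₗ[ℝ] F}
    (hK : Function.Surjective K) (hAK : ∀ t, ⟪A t, t⟫ ≤ ‖K t‖ ^ 2) :
    ∃ T : F →ₗ[ℝ] F, T.IsPositive ∧ (1 - T).IsPositive ∧ ∀ t, ⟪A t, t⟫ = ‖T (K t)‖ ^ 2 := by
  obtain ⟨R, hR⟩ := K.exists_rightInverse_of_surjective (LinearMap.range_eq_top.2 hK)
  replace hR : ∀ u, K (R u) = u := LinearMap.congr_fun hR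
  obtain ⟨T, hT, hTT⟩ := exists_isPositive_mul_self_eq (hA.adjoint_conj R)
  have norm_T : ∀ u, ‖T u‖ ^ 2 = ⟪A (R u), R u⟫ := fun u ↦ by
    rw [← inner_mul_self_apply_self hT.isSymmetric, hTT]
    exact LinearMap.adjoint_inner_left R u (A (R u))
  refine ⟨T, hT, isPositive_one_sub_of_forall_norm_le hT fun u ↦ ?_, fun t ↦ ?_⟩
  · rw [← sq_le_sq₀ (norm_nonneg _) (norm_nonneg _), norm_T]
    simpa only [hR] using hAK (R u)
  · have h_ker : A (t - R (K t)) = 0 := by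
      refine apply_eq_zero_of_inner_apply_self_eq_zero hA
        (le_antisymm ((hAK _).trans_eq ?_) (hA.inner_nonneg_left _))
      rw [map_sub, hR, sub_self, norm_zero, zero_pow two_ne_zero]
    have h_eq : A t = A (R (K t)) := by rwa [map_sub, sub_eq_zero] at h_ker
    calc ⟪A t, t⟫ = ⟪R (K t), A t⟫ := by rw [h_eq, hA.isSymmetric, h_eq]
      _ = ‖T (K t)‖ ^ 2 := by rw [real_inner_comm, norm_T, h_eq]

theorem exists_surjective_norm_sq_eq (hA : A.IsPositive) (hAB : (B - A).IsPositive) :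
    ∃ (U : Submodule ℝ E) (K : E →ₗ[ℝ] U) (T : U →ₗ[ℝ] U), Function.Surjective K ∧
      T.IsPositive ∧ (1 - T).IsPositive ∧
      (∀ t, ⟪B t, t⟫ = ‖K t‖ ^ 2) ∧ ∀ t, ⟪A t, t⟫ = ‖T (K t)‖ ^ 2 := by
  obtain ⟨S, hS, hSS⟩ := exists_isPositive_mul_self_eq (A := B) (by simpa using hA.add hAB)
  have hBS : ∀ t, ⟪B t, t⟫ = ‖S.rangeRestrict t‖ ^ 2 := fun t ↦
    hSS ▸ inner_mul_self_apply_self hS.isSymmetric t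
  obtain ⟨T, hT, hT₁, hAT⟩ :=
      exists_norm_sq_comp_eq_of_surjective hA S.surjective_rangeRestrict fun t ↦ by
    rw [← hBS, ← sub_nonneg, ← inner_sub_left]
    exact hAB.inner_nonneg_left t
  exact ⟨_, S.rangeRestrict, T, S.surjective_rangeRestrict, hT, hT₁, hBS, hAT⟩

end Operators

section Elliptical

/-- The measure `μ` is an elliptical distribution with location `0`, dispersion operator `A` and
characteristic generator `φ`; the dispersion `tᵀΣt` is written `⟪A t, t⟫`. -/
def IsElliptical {E : Type*} [NormedAddCommGroup E] [InnerProductSpace ℝ E] [MeasurableSpace E]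
    (μ : Measure E) (A : E →ₗ[ℝ] E) (φ : ℝ → ℂ) : Prop :=
  ∀ t, charFun μ t = φ ⟪A t, t⟫

theorem IsElliptical.isSpherical {E : Type*} [NormedAddCommGroup E]
    [InnerProductSpace ℝ E] [MeasurableSpace E] {ν : Measure E} {φ : ℝ → ℂ}
    (hν : IsElliptical ν 1 φ) : IsSpherical ν := fun u v huv ↦ by
  rw [hν, hν, Module.End.one_apply, Module.End.one_apply, real_inner_self_eq_norm_sq,
    real_inner_self_eq_norm_sq, huv]

variable {E F : Type*} [NormedAddCommGroup E] [InnerProductSpace ℝ E] [FiniteDimensional ℝ E]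
  [MeasurableSpace E] [BorelSpace E] [NormedAddCommGroup F] [InnerProductSpace ℝ F]
  [FiniteDimensional ℝ F] [MeasurableSpace F] [BorelSpace F] {μ ν : Measure E}
  {A B : E →ₗ[ℝ] E} {φ : ℝ → ℂ}

theorem charFun_map_linearMap (μ : Measure E) (L : E →ₗ[ℝ] F) (t : F) :
    charFun (μ.map L) t = charFun μ (L.adjoint t) := by
  have hL : Continuous L := L.continuous_of_finiteDimensional
  rw [charFun_apply, charFun_apply, integral_map hL.aemeasurable (by fun_prop)]
  simp only [LinearMap.adjoint_inner_right]

theorem IsElliptical.map (hν : IsElliptical ν B φ) (L : E →ₗ[ℝ] F) {A : F →ₗ[ℝ] F}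
    (hA : ∀ t, ⟪A t, t⟫ = ⟪B (L.adjoint t), L.adjoint t⟫) : IsElliptical (ν.map L) A φ :=
  fun t ↦ by rw [charFun_map_linearMap, hν, hA]

theorem IsElliptical.measure_eq [IsFiniteMeasure μ] [IsFiniteMeasure ν] (hμ : IsElliptical μ A φ)
    (hν : IsElliptical ν A φ) : μ = ν :=
  Measure.ext_of_charFun <| funext fun t ↦ (hμ t).trans (hν t).symm

theorem elliptical_anderson_general [IsFiniteMeasure μ] [IsFiniteMeasure ν]
    (hμ : IsElliptical μ A φ) (hν : IsElliptical ν B φ) (hA : A.IsPositive)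
    (hAB : (B - A).IsPositive) {C : Set E} (hC : MeasurableSet C) (hC_conv : Convex ℝ C)
    (hC_symm : -C = C) : ν C ≤ μ C := by
  obtain ⟨U, K, T, hK, hT, hT₁, hBK, hAT⟩ := exists_surjective_norm_sq_eq hA hAB
  obtain ⟨R, hR⟩ := K.exists_rightInverse_of_surjective (LinearMap.range_eq_top.2 hK)
  have hζ : IsElliptical (ν.map R.adjoint) 1 φ := hν.map _ fun u ↦ by
    rw [LinearMap.adjoint_adjoint, hBK, ← LinearMap.comp_apply, hR, LinearMap.id_apply,
      Module.End.one_apply, real_inner_self_eq_norm_sq]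
  have hν_map : ν = (ν.map R.adjoint).map K.adjoint := hν.measure_eq <| hζ.map _ fun t ↦ by
    rw [LinearMap.adjoint_adjoint, hBK, Module.End.one_apply, real_inner_self_eq_norm_sq]
  have hμ_map : μ = (ν.map R.adjoint).map (K.adjoint ∘ₗ T) :=
    hμ.measure_eq <| hζ.map _ fun t ↦ by
      rw [LinearMap.adjoint_comp, LinearMap.adjoint_adjoint, hT.adjoint_eq, hAT,
        Module.End.one_apply, real_inner_self_eq_norm_sq, LinearMap.comp_apply]
  have hK_meas : Measurable K.adjoint := K.adjoint.continuous_of_finiteDimensional.measurable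
  have hKT_meas := (K.adjoint ∘ₗ T).continuous_of_finiteDimensional.measurable
  calc ν C = (ν.map R.adjoint) (K.adjoint ⁻¹' C) := by
        rw [← Measure.map_apply hK_meas hC, ← hν_map]
    _ ≤ (ν.map R.adjoint) (T ⁻¹' (K.adjoint ⁻¹' C)) := by
        refine hζ.isSpherical.measure_le_preimage (hK_meas hC) (hC_conv.linear_preimage _) ?_ hT hT₁
        ext x
        rw [Set.mem_neg, Set.mem_preimage, map_neg, ← Set.mem_neg, hC_symm, Set.mem_preimage]
    _ = μ C := by
        rw [← Set.preimage_comp, ← LinearMap.coe_comp, ← Measure.map_apply hKT_meas hC, ← hμ_map]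

end Elliptical

section RandomVector

variable {Ω : Type*} [MeasurableSpace Ω] {n : ℕ}

theorem charFun_map_toLp (P : Measure Ω) {Z : Ω → Fin n → ℝ} (hZ : Measurable Z)
    (t : EuclideanSpace ℝ (Fin n)) : charFun (P.map (WithLp.toLp 2 ∘ Z)) t = charFn P Z t.ofLp := by
  rw [charFun_apply, charFn, integral_map ((WithLp.measurable_toLp 2 _).comp hZ).aemeasurable
    (Measurable.aestronglyMeasurable (by fun_prop))]
  simp only [EuclideanSpace.inner_eq_star_dotProduct, star_trivial, dotProduct, Function.comp_apply]

theorem isElliptical_map_toLp {P : Measure Ω} {Z : Ω → Fin n → ℝ} (hZ : Measurable Z)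
    {S : Matrix (Fin n) (Fin n) ℝ} {φ : ℝ → ℂ}
    (hZ_char : ∀ t, charFn P Z t = φ (t ⬝ᵥ S *ᵥ t)) :
    IsElliptical (P.map (WithLp.toLp 2 ∘ Z)) S.toEuclideanLin φ := fun t ↦ by
  rw [charFun_map_toLp P hZ, hZ_char, ← inner_toEuclideanCLM, real_inner_comm]
  rfl

theorem map_toLp_preimage_ofLp (P : Measure Ω) {Z : Ω → Fin n → ℝ} (hZ : Measurable Z)
    {C : Set (Fin n → ℝ)} (hC : MeasurableSet C) :
    P.map (WithLp.toLp 2 ∘ Z) (WithLp.ofLp ⁻¹' C) = P (Z ⁻¹' C) :=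
  Measure.map_apply ((WithLp.measurable_toLp 2 _).comp hZ) (WithLp.measurable_ofLp 2 _ hC)

end RandomVector

/-- If `X`, `Y` are elliptically distributed with location `0`, common
characteristic generator `φ` and dispersion matrices `Sx ⪯ Sy`, then for every
measurable, convex, centrally symmetric set `C`, `P(X ∈ C) ≥ P(Y ∈ C)`. -/
theorem elliptical_anderson {Ω : Type*} [MeasurableSpace Ω]
    (P : Measure Ω) [IsProbabilityMeasure P] {n : ℕ}
    (X Y : Ω → Fin n → ℝ) (hX : Measurable X) (hY : Measurable Y)
    (Sx Sy : Matrix (Fin n) (Fin n) ℝ)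
    (hSx : Sx.PosSemidef) (hSy : Sy.PosSemidef)
    (φ : ℝ → ℂ)
    (hXell : ∀ t : Fin n → ℝ, charFn P X t = φ (t ⬝ᵥ Sx *ᵥ t))
    (hYell : ∀ t : Fin n → ℝ, charFn P Y t = φ (t ⬝ᵥ Sy *ᵥ t))
    (hle : (Sy - Sx).PosSemidef)
    (C : Set (Fin n → ℝ)) (hCmeas : MeasurableSet C)
    (hCconv : Convex ℝ C) (hCsymm : C = -C) :
    P (Y ⁻¹' C) ≤ P (X ⁻¹' C) := by
  rw [← map_toLp_preimage_ofLp P hX hCmeas, ← map_toLp_preimage_ofLp P hY hCmeas]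
  exact elliptical_anderson_general (isElliptical_map_toLp hX hXell)
    (isElliptical_map_toLp hY hYell) (isPositive_toEuclideanLin_iff.2 hSx)
    (by rwa [← map_sub, isPositive_toEuclideanLin_iff]) (WithLp.measurable_ofLp 2 _ hCmeas)
    (hCconv.linear_preimage (WithLp.linearEquiv 2 ℝ (Fin n → ℝ)).toLinearMap)
    (Set.ext fun x ↦ (Set.ext_iff.1 hCsymm x.ofLp).symm)
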